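/- Let n ≥ 4 and 1 ≤ p ≤ q−2 ≤ n−2. Then γ_{p,q} is undecomposable in PORD_n if and only if q−1 ∈ dom(γ_{p,q}) and n ∈ dom(γ_{p,q}), i.e. if and only if dom(γ_{p,q}) = [p, n]. -/

import Mathlib

/-!
Partial transformations on the chain X_n = {1 < 2 < ... < n}, encoded as
functions `ℕ → Option ℕ` (with `none` meaning "undefined"), composed
left-to-right: `x(αβ) = (xα)β`.
-/

namespace OrientedPT

noncomputable section
open scoped Classical

/-- A partial transformation, as a partial map on `ℕ`. -/
def PTrans : Type := ℕ → Option ℕ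

instance : Mul PTrans := ⟨fun f g x => (f x).bind g⟩

theorem mul_apply (f g : PTrans) (x : ℕ) : (f * g) x = (f x).bind g := rfl

instance : Semigroup PTrans where
  mul_assoc f g h := by
    funext x
    show ((f x).bind g).bind h = (f x).bind (fun y => (g y).bind h)
    cases f x <;> rfl

/-- The domain of a partial transformation. -/
def domSet (f : PTrans) : Set ℕ := {x | f x ≠ none}

/-- The image of a partial transformation. -/
def im (f : PTrans) : Set ℕ := {y | ∃ x, f x = some y}

/-- The set of fixed points: `fix(α) = {x ∈ dom α : xα = x}`. -/
def fixSet (f : PTrans) : Set ℕ := {x | f x = some x}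

/-- The value of `f` at `x` (defaulting to `0` off the domain). -/
def val (f : PTrans) (x : ℕ) : ℕ := (f x).getD 0

/-- `f` is a partial transformation on `X_n = {1,…,n}`. -/
def IsPT (n : ℕ) (f : PTrans) : Prop :=
  domSet f ⊆ Set.Icc 1 n ∧ im f ⊆ Set.Icc 1 n

/-- Order-decreasing: `xα ≤ x` for all `x ∈ dom α`. -/
def OrderDecr (f : PTrans) : Prop := ∀ x y, f x = some y → y ≤ x

/-- Order-preserving. -/
def OrderPres (f : PTrans) : Prop :=
  ∀ x y u v, f x = some u → f y = some v → x ≤ y → u ≤ v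

/-- Order-reversing. -/
def OrderRev (f : PTrans) : Prop :=
  ∀ x y u v, f x = some u → f y = some v → x ≤ y → v ≤ u

/-- Monotone: order-preserving or order-reversing. -/
def IsMonotone (f : PTrans) : Prop := OrderPres f ∨ OrderRev f

/-- Injectivity of a partial transformation. -/
def Inj (f : PTrans) : Prop := ∀ x y z, f x = some z → f y = some z → x = y

/-- The cyclic successor of `a` in the set `D`: the least element of `D`
above `a` if there is one, and otherwise the least element of `D`. -/
def cycSucc (D : Set ℕ) (a : ℕ) : ℕ :=
  if {x ∈ D | a < x}.Nonempty then sInf {x ∈ D | a < x} else sInf D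

/-- The cyclic descents of `f`: those `a ∈ dom f` whose cyclic successor in
`dom f` has a strictly smaller value. Writing `dom f = {x₁ < ⋯ < x_t}` these
are exactly the indices `1 ≤ i ≤ t` with `x_{i+1}α < x_iα` (where `x_{t+1} = x₁`). -/
def descents (f : PTrans) : Set ℕ :=
  {a ∈ domSet f | val f (cycSucc (domSet f) a) < val f a}

/-- The cyclic ascents of `f`. -/
def ascents (f : PTrans) : Set ℕ :=
  {a ∈ domSet f | val f a < val f (cycSucc (domSet f) a)}

/-- Orientation-preserving: at most one cyclic descent. -/
def OrientPres (f : PTrans) : Prop := (descents f).ncard ≤ 1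

/-- Orientation-reversing: at most one cyclic ascent. -/
def OrientRev (f : PTrans) : Prop := (ascents f).ncard ≤ 1

/-- Oriented: orientation-preserving or orientation-reversing. -/
def Oriented (f : PTrans) : Prop := OrientPres f ∨ OrientRev f

/-- `PORD n`: all oriented and order-decreasing partial transformations on `X_n`. -/
def PORD (n : ℕ) : Set PTrans := {f | IsPT n f ∧ Oriented f ∧ OrderDecr f}

/-- `PORD(n,r) = {α ∈ PORD_n : |im α| ≤ r}`. -/
def PORDr (n r : ℕ) : Set PTrans := {f ∈ PORD n | (im f).ncard ≤ r}

/-- `POPD n`: the orientation-preserving elements of `PORD n`. -/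
def POPD (n : ℕ) : Set PTrans := {f ∈ PORD n | OrientPres f}

/-- `PORD_n^* = PORD_n \ POPD_n`. -/
def PORDstar (n : ℕ) : Set PTrans := PORD n \ POPD n

/-- `PMD n`: monotone and order-decreasing partial transformations on `X_n`. -/
def PMD (n : ℕ) : Set PTrans := {f | IsPT n f ∧ IsMonotone f ∧ OrderDecr f}

/-- `PRD_n^* = PORD_n^* \ PMD_n`. -/
def PRDstar (n : ℕ) : Set PTrans := PORDstar n \ PMD n

/-- `IORD n`: the injective elements of `PORD n`. -/
def IORD (n : ℕ) : Set PTrans := {f ∈ PORD n | Inj f}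

/-- `IORD(n,r) = {α ∈ IORD_n : |im α| ≤ r}`. -/
def IORDr (n r : ℕ) : Set PTrans := {f ∈ IORD n | (im f).ncard ≤ r}

/-- `A` is a generating set of `S`: `A ⊆ S` and the smallest subsemigroup
containing `A` is `S`. -/
def IsGenSet (S A : Set PTrans) : Prop :=
  A ⊆ S ∧ (Subsemigroup.closure A : Set PTrans) = S

/-- A minimal generating set: a generating set of minimum cardinality. -/
def IsMinGenSet (S A : Set PTrans) : Prop :=
  IsGenSet S A ∧ ∀ B : Set PTrans, IsGenSet S B → A.ncard ≤ B.ncard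

/-- The rank of `S`: the minimum cardinality of a generating set of `S`. -/
def rank (S : Set PTrans) : ℕ :=
  sInf {k | ∃ A : Set PTrans, IsGenSet S A ∧ A.ncard = k}

/-- `z` is undecomposable in `S`: `z = xy` with `x, y ∈ S` forces `z = x` or `z = y`. -/
def Undecomposable (S : Set PTrans) (z : PTrans) : Prop :=
  ∀ x ∈ S, ∀ y ∈ S, z = x * y → z = x ∨ z = y

/-- `T` is a subsemigroup of (the semigroup given by the subset) `S`. -/
def IsSubsemigroupOf (T S : Set PTrans) : Prop :=
  T ⊆ S ∧ ∀ a ∈ T, ∀ b ∈ T, a * b ∈ T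

/-- `T` is a maximal subsemigroup of `S`: a maximal element, under inclusion,
of the family of proper subsemigroups of `S`. -/
def IsMaximalSubsemigroup (S T : Set PTrans) : Prop :=
  IsSubsemigroupOf T S ∧ T ≠ S ∧
    ∀ U : Set PTrans, IsSubsemigroupOf U S → U ≠ S → T ⊆ U → T = U

/-- The restriction of `f` to `Y`. -/
def restrict (f : PTrans) (Y : Set ℕ) : PTrans :=
  fun x => if x ∈ Y then f x else none

/-- The partial identity `1_Y` on `Y`. -/
def partialId (Y : Set ℕ) : PTrans := fun x => if x ∈ Y then some x else none

/-- `ξ_{p,q}`: domain `[p, q+1]`, fixes every point of `[p,q]`, maps `q+1` to `p`. -/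
def xi (p q : ℕ) : PTrans := fun x =>
  if p ≤ x ∧ x ≤ q then some x else if x = q + 1 then some p else none

/-- `γ_{p,q}` (for `1 ≤ p ≤ q−2 ≤ n−2`): with `k = min(p−1, q−p−1)` and
`l = min(q−p−1, n−q)`, it has domain `[p, p+k] ∪ [q, q+l]` and maps
`p+i ↦ p−i` and `q+j ↦ q−j`. -/
def gamma (n p q : ℕ) : PTrans := fun x =>
  if p ≤ x ∧ x ≤ p + min (p - 1) (q - p - 1) then some (2 * p - x)
  else if q ≤ x ∧ x ≤ q + min (q - p - 1) (n - q) then some (2 * q - x)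
  else none

/-- `γ_{p,q}^{r,s}`: with `u = min(r−s, q−p, n−q+1)`, it has domain
`[p, p+s−1] ∪ [q, q+u−1]` and maps `p+i ↦ p−i` and `q+j ↦ q−j`. -/
def gammaRS (n r p q s : ℕ) : PTrans := fun x =>
  if p ≤ x ∧ x + 1 ≤ p + s then some (2 * p - x)
  else if q ≤ x ∧ x + 1 ≤ q + min (r - s) (min (q - p) (n - q + 1)) then some (2 * q - x)
  else none

/-- `δ^a_Y`: domain `Y ∪ {a}`, fixes every point of `Y`, maps `a` to `a−1`. -/
def deltaMap (a : ℕ) (Y : Set ℕ) : PTrans :=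
  fun x => if x ∈ Y then some x else if x = a then some (a - 1) else none

/-- `ζ_Z`: with `a = max Z` and `b = min Z`, domain `Z ∪ {a+1}`, fixes every
point of `Z`, maps `a+1` to `b−1`. -/
def zetaMap (Z : Set ℕ) : PTrans :=
  fun x => if x ∈ Z then some x else if x = sSup Z + 1 then some (sInf Z - 1) else none

/-- `E_r`: the idempotents of `PORD_n` with image of size exactly `r`. -/
def Eset (n r : ℕ) : Set PTrans := {f ∈ PORD n | f * f = f ∧ (im f).ncard = r}

/-- `F_r = {ξ_{p,q}^r : 1 ≤ p ≤ n−2, p+1 ≤ q ≤ p+r−2 ≤ n−1}`. -/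
def Fset (n r : ℕ) : Set PTrans :=
  {f | ∃ p q : ℕ, 1 ≤ p ∧ p + 2 ≤ n ∧ p + 1 ≤ q ∧ q + 2 ≤ p + r ∧ p + r ≤ n + 1 ∧
    f = xi p q}

/-- `G_n = {γ_{p,q} : 1 ≤ p ≤ q−2 ≤ n−2} \ {γ_{1,n}}`. -/
def Gset (n : ℕ) : Set PTrans :=
  {f | ∃ p q : ℕ, 1 ≤ p ∧ p + 2 ≤ q ∧ q ≤ n ∧ f = gamma n p q} \ {gamma n 1 n}

/-- `H_n^r = {γ_{p,q}^{r,s} : 1 ≤ p ≤ q−2 ≤ n−2, 1 ≤ s ≤ min{p, q−p, r−1}, (q,s) ≠ (n,1)}`. -/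
def Hset (n r : ℕ) : Set PTrans :=
  {f | ∃ p q s : ℕ, 1 ≤ p ∧ p + 2 ≤ q ∧ q ≤ n ∧ 1 ≤ s ∧
    s ≤ min p (min (q - p) (r - 1)) ∧ ¬(q = n ∧ s = 1) ∧ f = gammaRS n r p q s}

/-- `EI_r = {1_Y : Y ⊆ X_n, |Y| = r}`. -/
def EIset (n r : ℕ) : Set PTrans :=
  {f | ∃ Y : Set ℕ, Y ⊆ Set.Icc 1 n ∧ Y.ncard = r ∧ f = partialId Y}

/-- `FI_r = {δ^a_Y : 2 ≤ a ≤ n, Y ⊆ X_n \ {a−1,a}, |Y| = r−1}`. -/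
def FIset (n r : ℕ) : Set PTrans :=
  {f | ∃ (a : ℕ) (Y : Set ℕ), 2 ≤ a ∧ a ≤ n ∧ Y ⊆ Set.Icc 1 n \ {a - 1, a} ∧
    Y.ncard = r - 1 ∧ f = deltaMap a Y}

/-- `GI_k = {ζ_Z : Z ⊆ X_n \ {1,n}, |Z| = k−1}`. -/
def GIset (n k : ℕ) : Set PTrans :=
  {f | ∃ Z : Set ℕ, Z ⊆ Set.Icc 1 n \ {1, n} ∧ Z.ncard = k - 1 ∧ f = zetaMap Z}

/-- `GI_k^c`: those `ζ_Z ∈ GI_k` with `Z` a convex subset (an interval). -/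
def GIcset (n k : ℕ) : Set PTrans :=
  {f | ∃ Z : Set ℕ, Z ⊆ Set.Icc 1 n \ {1, n} ∧ Z.ncard = k - 1 ∧ Z.OrdConnected ∧
    f = zetaMap Z}

/-- `F^r_{p,q} = {α ∈ PORD(n,r) : α restricted to [p, q+1] equals ξ_{p,q}^r}`. -/
def Frestr (n r p q : ℕ) : Set PTrans :=
  {f ∈ PORDr n r | restrict f (Set.Icc p (q + 1)) = xi p q}

/-- `G_{p,q} = {α ∈ PORD^*(n,r) : α restricted to dom(γ_{p,q}) equals γ_{p,q}}`. -/
def Grestr (n r p q : ℕ) : Set PTrans :=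
  {f ∈ PORDr n r ∩ PORDstar n | restrict f (domSet (gamma n p q)) = gamma n p q}

/-- `H^{r,s}_{p,q} = {α ∈ PORD^*(n,r) : α restricted to dom(γ^{r,s}_{p,q}) equals γ^{r,s}_{p,q}}`. -/
def Hrestr (n r p q s : ℕ) : Set PTrans :=
  {f ∈ PORDr n r ∩ PORDstar n |
    restrict f (domSet (gammaRS n r p q s)) = gammaRS n r p q s}

end

end OrientedPT

/-!
Let `dom γ_{p,q} = [p,n]`. A left factor `x` of `γ_{p,q}` is squeezed between `γ_{p,q}` and the
identity on `[p,n]`, hence fixes `p` and `q`, and it is injective there. Being oriented, it is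
strictly monotone on each of `[p,q-1]` and `[q,n]`, with the same direction on both: increasing
forces `x` to be the identity on `[p,n]`, decreasing forces `x = γ_{p,q}` there. So one of the two
factors agrees with `γ_{p,q}` on `[p,n]`, and no element of `PORD_n` extends `γ_{p,q}` properly.

Conversely, `γ_{p,q}` is always the restriction of a map in `PORD_n` with domain `[p,n]`. If its own
domain is smaller, this writes it as a partial identity times a different map, so it can only be
undecomposable if it is itself a partial identity. Then it is `1_{1,n}`, which is
`1_{1,2,n} 1_{1,3,n}`.
-/

namespace OrientedPT

open Set

-- With this instance `btw u v w` means that some rotation of `u, v, w` is nondecreasing.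
attribute [local instance] LE.toBtw

/-! ### Cyclic descents -/

section CyclicDescents

variable {β : Type*} [LinearOrder β] {D : Set ℕ} {g : ℕ → β} {a b c : ℕ}

theorem cycSucc_mem_of_lt (hb : b ∈ D) (hab : a < b) :
    cycSucc D a ∈ D ∧ a < cycSucc D a ∧ cycSucc D a ≤ b := by
  have hne : {x ∈ D | a < x}.Nonempty := ⟨b, hb, hab⟩
  rw [cycSucc, if_pos hne]
  exact ⟨(Nat.sInf_mem hne).1, (Nat.sInf_mem hne).2, Nat.sInf_le ⟨hb, hab⟩⟩

theorem cycSucc_eq_sInf (h : ∀ x ∈ D, x ≤ a) : cycSucc D a = sInf D :=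
  if_neg fun ⟨x, hx, hax⟩ => (h x hx).not_gt hax

/-- The cyclic descents of a map `g` on a set `D`. Taking `g = val f` gives `descents f`; taking
`g` to be `val f` with values in the order dual gives `ascents f`. -/
def cycDescents (D : Set ℕ) (g : ℕ → β) : Set ℕ :=
  {a ∈ D | g (cycSucc D a) < g a}

theorem exists_cycDescent_mem_Ico (ha : a ∈ D) (hb : b ∈ D) (hab : a < b) (h : g b < g a) :
    ∃ d ∈ cycDescents D g, d ∈ Ico a b := by
  let S := {x ∈ D | x < b ∧ g b < g x}
  have haS : a ∈ S := ⟨ha, hab, h⟩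
  have hbdd : BddAbove S := ⟨b, fun x hx => hx.2.1.le⟩
  obtain ⟨hdD, hdb, hgd⟩ : sSup S ∈ S := Nat.sSup_mem ⟨a, haS⟩ hbdd
  obtain ⟨hsD, hds, hsb⟩ := cycSucc_mem_of_lt hb hdb
  refine ⟨sSup S, ⟨hdD, ?_⟩, le_csSup hbdd haS, hdb⟩
  rcases hsb.eq_or_lt with heq | hlt
  · rwa [heq]
  · exact (not_lt.1 fun hg => notMem_of_csSup_lt hds hbdd ⟨hsD, hlt, hg⟩).trans_lt hgd

theorem exists_cycDescent_notMem_Ico (hD : D.Finite) (ha : a ∈ D) (hb : b ∈ D) (h : g a < g b) :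
    ∃ d ∈ cycDescents D g, d ∉ Ico a b := by
  have hmax : sSup D ∈ D := Nat.sSup_mem ⟨a, ha⟩ hD.bddAbove
  have hle : ∀ x ∈ D, x ≤ sSup D := fun x => le_csSup hD.bddAbove
  have hmin : sInf D ∈ D := Nat.sInf_mem ⟨a, ha⟩
  by_cases hwrap : g (sInf D) < g (sSup D)
  · exact ⟨sSup D, ⟨hmax, by rwa [cycSucc_eq_sInf hle]⟩, fun hd => (hle b hb).not_gt hd.2⟩
  rcases lt_or_ge (g (sSup D)) (g b) with hlast | hlast
  · have hlt : b < sSup D := (hle b hb).lt_of_ne fun heq => hlast.ne (congrArg g heq.symm)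
    obtain ⟨d, hd, hbd, -⟩ := exists_cycDescent_mem_Ico hb hmax hlt hlast
    exact ⟨d, hd, fun hd' => hbd.not_gt hd'.2⟩
  · have hfirst : g a < g (sInf D) := h.trans_le (hlast.trans (not_lt.1 hwrap))
    have hlt : sInf D < a := (Nat.sInf_le ha).lt_of_ne fun heq => hfirst.ne (congrArg g heq.symm)
    obtain ⟨d, hd, -, hda⟩ := exists_cycDescent_mem_Ico hmin ha hlt hfirst
    exact ⟨d, hd, fun hd' => hd'.1.not_gt hda⟩

theorem btw_of_ncard_cycDescents_le_one (hD : D.Finite) (hg : (cycDescents D g).ncard ≤ 1)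
    (ha : a ∈ D) (hb : b ∈ D) (hc : c ∈ D) (hab : a < b) (hbc : b < c) :
    btw (g a) (g b) (g c) := by
  have huniq : ∀ d ∈ cycDescents D g, ∀ e ∈ cycDescents D g, d = e :=
    (ncard_le_one (hD.subset (sep_subset _ _))).1 hg
  by_contra hnot
  -- Two of the three arcs from `a` to `b`, from `b` to `c` and from `c` around to `a` end lower
  -- than they start, and each such arc contains a cyclic descent.
  have htwo : (g b < g a ∧ g c < g b) ∨ (g c < g b ∧ g a < g c) ∨ (g a < g c ∧ g b < g a) := by
    simp only [btw] at hnot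
    grind
  rcases htwo with ⟨hba, hcb⟩ | ⟨hcb, hac⟩ | ⟨hac, hba⟩
  · obtain ⟨d, hd, -, hdb⟩ := exists_cycDescent_mem_Ico ha hb hab hba
    obtain ⟨e, he, hbe, -⟩ := exists_cycDescent_mem_Ico hb hc hbc hcb
    exact (hdb.trans_le hbe).ne (huniq d hd e he)
  · obtain ⟨d, hd, hbd, hdc⟩ := exists_cycDescent_mem_Ico hb hc hbc hcb
    obtain ⟨e, he, hnotMem⟩ := exists_cycDescent_notMem_Ico hD ha hc hac
    exact hnotMem (huniq d hd e he ▸ ⟨hab.le.trans hbd, hdc⟩)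
  · obtain ⟨d, hd, had, hdb⟩ := exists_cycDescent_mem_Ico ha hb hab hba
    obtain ⟨e, he, hnotMem⟩ := exists_cycDescent_notMem_Ico hD ha hc hac
    exact hnotMem (huniq d hd e he ▸ ⟨had, hdb.trans hbc⟩)

theorem ncard_cycDescents_le_one_of_monotoneOn (s : ℕ) (hleft : MonotoneOn g (D ∩ Iio s))
    (hright : MonotoneOn g (D ∩ Ici s)) (hcut : ∀ a ∈ D ∩ Iio s, ∀ b ∈ D ∩ Ici s, g b ≤ g a) :
    (cycDescents D g).ncard ≤ 1 := by
  have not_lt_of_mem : ∀ a ∈ cycDescents D g, ∀ b ∈ cycDescents D g, ¬a < b := by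
    rintro a ⟨ha, hda⟩ b ⟨hb, hdb⟩ hab
    obtain ⟨hsD, has, hsb⟩ := cycSucc_mem_of_lt hb hab
    have hlt : a < s := by
      by_contra! hsa
      exact (hright ⟨ha, hsa⟩ ⟨hsD, hsa.trans has.le⟩ has.le).not_gt hda
    have hle : s ≤ cycSucc D a := by
      by_contra! hss
      exact (hleft ⟨ha, hlt⟩ ⟨hsD, hss⟩ has.le).not_gt hda
    have hsb' : s ≤ b := hle.trans hsb
    have hmax : ∀ x ∈ D, x ≤ b := by
      by_contra! ⟨x, hx, hbx⟩
      obtain ⟨htD, hbt, -⟩ := cycSucc_mem_of_lt hx hbx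
      exact (hright ⟨hb, hsb'⟩ ⟨htD, hsb'.trans hbt.le⟩ hbt.le).not_gt hdb
    rw [cycSucc_eq_sInf hmax] at hdb
    exact (hcut _ ⟨Nat.sInf_mem ⟨a, ha⟩, (Nat.sInf_le ha).trans_lt hlt⟩ b ⟨hb, hsb'⟩).not_gt hdb
  have hsub : (cycDescents D g).Subsingleton := fun a ha b hb =>
    le_antisymm (not_lt.1 (not_lt_of_mem b hb a ha)) (not_lt.1 (not_lt_of_mem a ha b hb))
  exact (ncard_le_one hsub.finite).2 fun a ha b hb => hsub ha hb

end CyclicDescents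

/-! ### Oriented partial transformations -/

section Oriented

variable {n : ℕ} {f : PTrans} {a b c u : ℕ}

theorem mem_domSet_of_eq_some (h : f a = some u) : a ∈ domSet f := by
  simp [domSet, h]

theorem val_of_eq_some (h : f a = some u) : val f a = u := by
  simp [val, h]

theorem eq_some_val (h : a ∈ domSet f) : f a = some (val f a) := by
  obtain ⟨u, hu⟩ := Option.ne_none_iff_exists'.1 h
  rw [hu, val_of_eq_some hu]

theorem eq_none_of_notMem_domSet (h : a ∉ domSet f) : f a = none :=
  not_not.1 h

theorem OrderDecr.val_le (hf : OrderDecr f) (ha : a ∈ domSet f) : val f a ≤ a :=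
  hf _ _ (eq_some_val ha)

theorem IsPT.finite_domSet (hf : IsPT n f) : (domSet f).Finite :=
  (finite_Icc 1 n).subset hf.1

theorem OrientPres.btw (hf : OrientPres f) (hfin : (domSet f).Finite) (ha : a ∈ domSet f)
    (hb : b ∈ domSet f) (hc : c ∈ domSet f) (hab : a < b) (hbc : b < c) :
    btw (val f a) (val f b) (val f c) :=
  btw_of_ncard_cycDescents_le_one hfin hf ha hb hc hab hbc

theorem OrientRev.btw (hf : OrientRev f) (hfin : (domSet f).Finite) (ha : a ∈ domSet f)
    (hb : b ∈ domSet f) (hc : c ∈ domSet f) (hab : a < b) (hbc : b < c) :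
    btw (val f c) (val f b) (val f a) := by
  have h := btw_of_ncard_cycDescents_le_one (g := OrderDual.toDual ∘ val f) hfin hf
    ha hb hc hab hbc
  simp only [Btw.btw, Function.comp_apply, OrderDual.toDual_le_toDual] at h ⊢
  tauto

theorem OrientPres.monotoneOn_lt (hf : OrientPres f) (hfin : (domSet f).Finite)
    (hc : c ∈ domSet f) : MonotoneOn (val f) {i ∈ domSet f | i < c ∧ val f i < val f c} := by
  rintro i ⟨hi, -, hic⟩ j ⟨hj, hjc, hjc'⟩ hij
  rcases hij.eq_or_lt with rfl | hij
  · rfl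
  rcases hf.btw hfin hi hj hc hij hjc with h | h | h <;> omega

theorem OrientPres.monotoneOn_gt (hf : OrientPres f) (hfin : (domSet f).Finite)
    (hc : c ∈ domSet f) : MonotoneOn (val f) {i ∈ domSet f | c < i ∧ val f c < val f i} := by
  rintro i ⟨hi, hci, -⟩ j ⟨hj, -, hcj⟩ hij
  rcases hij.eq_or_lt with rfl | hij
  · rfl
  rcases hf.btw hfin hc hi hj hci hij with h | h | h <;> omega

theorem OrientRev.antitoneOn_lt (hf : OrientRev f) (hfin : (domSet f).Finite)
    (hc : c ∈ domSet f) : AntitoneOn (val f) {i ∈ domSet f | i < c ∧ val f i < val f c} := by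
  rintro i ⟨hi, -, -⟩ j ⟨hj, hjc, hjc'⟩ hij
  rcases hij.eq_or_lt with rfl | hij
  · rfl
  rcases hf.btw hfin hi hj hc hij hjc with h | h | h <;> omega

theorem OrientRev.antitoneOn_gt (hf : OrientRev f) (hfin : (domSet f).Finite)
    (hc : c ∈ domSet f) : AntitoneOn (val f) {i ∈ domSet f | c < i ∧ val f c < val f i} := by
  rintro i ⟨hi, hci, hci'⟩ j ⟨hj, -, hcj⟩ hij
  rcases hij.eq_or_lt with rfl | hij
  · rfl
  rcases hf.btw hfin hc hi hj hci hij with h | h | h <;> omega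

theorem orientPres_of_monotoneOn (h : MonotoneOn (val f) (domSet f)) : OrientPres f :=
  ncard_cycDescents_le_one_of_monotoneOn 0 (h.mono inter_subset_left) (h.mono inter_subset_left)
    fun a ha => absurd ha.2 (Nat.not_lt_zero a)

theorem orientRev_of_antitoneOn (s : ℕ) (hleft : AntitoneOn (val f) (domSet f ∩ Iio s))
    (hright : AntitoneOn (val f) (domSet f ∩ Ici s))
    (hcut : ∀ a ∈ domSet f ∩ Iio s, ∀ b ∈ domSet f ∩ Ici s, val f a ≤ val f b) : OrientRev f :=
  ncard_cycDescents_le_one_of_monotoneOn (g := OrderDual.toDual ∘ val f) s hleft.dual_right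
    hright.dual_right hcut

end Oriented

/-! ### Products and partial identities -/

section Products

variable {n : ℕ} {f g : PTrans} {i u : ℕ} {Y Z : Set ℕ}

theorem mul_eq_some_iff : (f * g) i = some u ↔ ∃ z, f i = some z ∧ g z = some u :=
  Option.bind_eq_some_iff

theorem eq_some_val_and_apply_val_of_mem_domSet_mul (hi : i ∈ domSet (f * g)) :
    f i = some (val f i) ∧ g (val f i) = (f * g) i := by
  obtain ⟨z, hz, hzu⟩ := mul_eq_some_iff.1 (eq_some_val hi)
  rw [val_of_eq_some hz, hzu, ← eq_some_val hi]
  exact ⟨hz, rfl⟩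

theorem domSet_mul_subset : domSet (f * g) ⊆ domSet f := fun _ hi =>
  mem_domSet_of_eq_some (eq_some_val_and_apply_val_of_mem_domSet_mul hi).1

theorem injOn_val_of_injOn_mul (h : InjOn (f * g) (domSet (f * g))) :
    InjOn (val f) (domSet (f * g)) := fun i hi j hj hij =>
  h hi hj <| by
    rw [← (eq_some_val_and_apply_val_of_mem_domSet_mul hi).2, hij,
      (eq_some_val_and_apply_val_of_mem_domSet_mul hj).2]

theorem OrderDecr.val_mul_le (hg : OrderDecr g) (hi : i ∈ domSet (f * g)) :
    val (f * g) i ≤ val f i :=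
  hg _ _ ((eq_some_val_and_apply_val_of_mem_domSet_mul hi).2.trans (eq_some_val hi))

theorem partialId_of_mem (h : i ∈ Y) : partialId Y i = some i := if_pos h

theorem partialId_of_notMem (h : i ∉ Y) : partialId Y i = none := if_neg h

theorem domSet_partialId (Y : Set ℕ) : domSet (partialId Y) = Y := by
  ext i
  simp [domSet, partialId]

theorem restrict_of_mem (h : i ∈ Y) : restrict f Y i = f i := if_pos h

theorem restrict_of_notMem (h : i ∉ Y) : restrict f Y i = none := if_neg h

theorem partialId_mul (Y : Set ℕ) (f : PTrans) : partialId Y * f = restrict f Y := by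
  funext i
  by_cases hi : i ∈ Y
  · rw [restrict_of_mem hi]
    exact congrArg (Option.bind · f) (partialId_of_mem hi)
  · rw [restrict_of_notMem hi]
    exact congrArg (Option.bind · f) (partialId_of_notMem hi)

theorem restrict_partialId (Y Z : Set ℕ) : restrict (partialId Z) Y = partialId (Y ∩ Z) := by
  funext i
  by_cases hY : i ∈ Y <;> by_cases hZ : i ∈ Z <;> simp [restrict, partialId, hY, hZ]

theorem partialId_mem_PORD (hY : Y ⊆ Icc 1 n) : partialId Y ∈ PORD n := by
  have eq_of_eq_some : ∀ i u, partialId Y i = some u → i ∈ Y ∧ u = i := by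
    simp [partialId, eq_comm]
  refine ⟨⟨(domSet_partialId Y).trans_subset hY, ?_⟩, Or.inl (orientPres_of_monotoneOn ?_), ?_⟩
  · rintro u ⟨i, hi⟩
    obtain ⟨hiY, rfl⟩ := eq_of_eq_some i u hi
    exact hY hiY
  · intro i hi j hj hij
    rw [domSet_partialId] at hi hj
    rwa [val_of_eq_some (partialId_of_mem hi), val_of_eq_some (partialId_of_mem hj)]
  · exact fun i u hi => (eq_of_eq_some i u hi).2.le

theorem Undecomposable.restrict_eq (h : Undecomposable (PORD n) (restrict f Y))
    (hf : f ∈ PORD n) (hY : Y ⊆ Icc 1 n) : restrict f Y = partialId Y ∨ restrict f Y = f :=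
  h _ (partialId_mem_PORD hY) f hf (partialId_mul Y f).symm

theorem Undecomposable.inter_eq (h : Undecomposable (PORD n) (partialId (Y ∩ Z)))
    (hY : Y ⊆ Icc 1 n) (hZ : Z ⊆ Icc 1 n) : Y ∩ Z = Y ∨ Y ∩ Z = Z := by
  rw [← restrict_partialId] at h
  have hid := h.restrict_eq (partialId_mem_PORD hZ) hY
  rw [restrict_partialId] at hid
  exact hid.imp (fun h => by simpa only [domSet_partialId] using congrArg domSet h)
    fun h => by simpa only [domSet_partialId] using congrArg domSet h

theorem Undecomposable.subsingleton_diff (h : Undecomposable (PORD n) (partialId Y))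
    (hY : Y ⊆ Icc 1 n) : (Icc 1 n \ Y).Subsingleton := by
  rintro a ⟨ha, haY⟩ b ⟨hb, hbY⟩
  by_contra hab
  have hinter : insert a Y ∩ insert b Y = Y := by
    ext i
    simp only [mem_inter_iff, mem_insert_iff]
    grind
  rw [← hinter] at h
  rcases h.inter_eq (insert_subset ha hY) (insert_subset hb hY) with heq | heq <;>
    rw [hinter] at heq
  · exact haY (heq ▸ mem_insert a Y)
  · exact hbY (heq ▸ mem_insert b Y)

end Products

/-! ### The maps `γ_{p,q}` -/

section Gamma

variable {n p q i : ℕ}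

theorem mem_domSet_gamma : i ∈ domSet (gamma n p q) ↔
    (p ≤ i ∧ i ≤ p + min (p - 1) (q - p - 1)) ∨ (q ≤ i ∧ i ≤ q + min (q - p - 1) (n - q)) := by
  simp only [domSet, gamma, mem_ofPred_eq]
  split_ifs <;> simp <;> omega

theorem gamma_of_lt (hi : i ∈ domSet (gamma n p q)) (hiq : i < q) :
    gamma n p q i = some (2 * p - i) := by
  rw [mem_domSet_gamma] at hi
  exact if_pos (by omega)

theorem gamma_of_le (hpq : p < q) (hi : i ∈ domSet (gamma n p q)) (hqi : q ≤ i) :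
    gamma n p q i = some (2 * q - i) := by
  rw [mem_domSet_gamma] at hi
  exact (if_neg (by omega)).trans (if_pos (by omega))

theorem domSet_gamma_subset (hpq : p < q) (hq : q ≤ n) : domSet (gamma n p q) ⊆ Icc p n := by
  intro i hi
  rw [mem_domSet_gamma] at hi
  rw [mem_Icc]
  omega

theorem domSet_gamma_eq_Icc_iff (hp : 1 ≤ p) (hpq : p + 2 ≤ q) (hq : q ≤ n) :
    domSet (gamma n p q) = Icc p n ↔
      q - 1 ∈ domSet (gamma n p q) ∧ n ∈ domSet (gamma n p q) := by
  constructor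
  · intro h
    rw [h, mem_Icc, mem_Icc]
    omega
  · rintro ⟨hq', hn'⟩
    rw [mem_domSet_gamma] at hq' hn'
    ext i
    rw [mem_domSet_gamma, mem_Icc]
    omega

theorem lt_val_gamma_of_le (hpq : p < q) (hi : i ∈ domSet (gamma n p q)) (hqi : q ≤ i) :
    p < val (gamma n p q) i := by
  rw [val_of_eq_some (gamma_of_le hpq hi hqi)]
  rw [mem_domSet_gamma] at hi
  omega

theorem injOn_gamma (hpq : p < q) : InjOn (gamma n p q) (domSet (gamma n p q)) := by
  intro i hi j hj hij
  have hi' := mem_domSet_gamma.1 hi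
  have hj' := mem_domSet_gamma.1 hj
  rcases lt_or_ge i q with hiq | hqi <;> rcases lt_or_ge j q with hjq | hqj
  · rw [gamma_of_lt hi hiq, gamma_of_lt hj hjq, Option.some_inj] at hij
    omega
  · rw [gamma_of_lt hi hiq, gamma_of_le hpq hj hqj, Option.some_inj] at hij
    omega
  · rw [gamma_of_le hpq hi hqi, gamma_of_lt hj hjq, Option.some_inj] at hij
    omega
  · rw [gamma_of_le hpq hi hqi, gamma_of_le hpq hj hqj, Option.some_inj] at hij
    omega

end Gamma

/-! ### The domain of an undecomposable `γ_{p,q}` -/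

section Necessity

variable {n p q i : ℕ}

/-- The extension of `γ_{p,q}` to `[p,n]` obtained by truncating the two decreasing runs of values
at `1` and at `p + 1`, which keeps it in `PORD_n`. -/
def gammaExt (n p q : ℕ) : PTrans := fun i =>
  if p ≤ i ∧ i < q then some (max 1 (2 * p - i))
  else if q ≤ i ∧ i ≤ n then some (max (p + 1) (2 * q - i))
  else none

theorem gammaExt_of_lt (hpi : p ≤ i) (hiq : i < q) :
    gammaExt n p q i = some (max 1 (2 * p - i)) :=
  if_pos ⟨hpi, hiq⟩

theorem gammaExt_of_le (hqi : q ≤ i) (hin : i ≤ n) :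
    gammaExt n p q i = some (max (p + 1) (2 * q - i)) :=
  (if_neg fun h => hqi.not_gt h.2).trans (if_pos ⟨hqi, hin⟩)

theorem domSet_gammaExt (hpq : p ≤ q) (hq : q ≤ n) : domSet (gammaExt n p q) = Icc p n := by
  ext i
  simp only [domSet, gammaExt, mem_ofPred_eq, mem_Icc]
  split_ifs <;> simp <;> omega

theorem restrict_gammaExt (hp : 1 ≤ p) (hpq : p < q) (hq : q ≤ n) :
    restrict (gammaExt n p q) (domSet (gamma n p q)) = gamma n p q := by
  funext i
  by_cases hi : i ∈ domSet (gamma n p q)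
  · rw [restrict_of_mem hi]
    have hdom := mem_domSet_gamma.1 hi
    rcases lt_or_ge i q with hiq | hqi
    · rw [gamma_of_lt hi hiq, gammaExt_of_lt (by omega) hiq, Option.some_inj]
      omega
    · rw [gamma_of_le hpq hi hqi, gammaExt_of_le hqi (by omega), Option.some_inj]
      omega
  · rw [restrict_of_notMem hi, eq_none_of_notMem_domSet hi]

theorem orientRev_gammaExt (hpq : p < q) (hq : q ≤ n) : OrientRev (gammaExt n p q) := by
  have val_of_lt : ∀ i ∈ Icc p n ∩ Iio q, val (gammaExt n p q) i = max 1 (2 * p - i) :=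
    fun i hi => val_of_eq_some (gammaExt_of_lt hi.1.1 hi.2)
  have val_of_le : ∀ i ∈ Icc p n ∩ Ici q, val (gammaExt n p q) i = max (p + 1) (2 * q - i) :=
    fun i hi => val_of_eq_some (gammaExt_of_le hi.2 hi.1.2)
  apply orientRev_of_antitoneOn q <;> rw [domSet_gammaExt hpq.le hq]
  · intro i hi j hj hij
    rw [val_of_lt i hi, val_of_lt j hj]
    omega
  · intro i hi j hj hij
    rw [val_of_le i hi, val_of_le j hj]
    omega
  · intro i hi j hj
    rw [val_of_lt i hi, val_of_le j hj]
    have := hi.1.1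
    omega

theorem gammaExt_mem_PORD (hp : 1 ≤ p) (hpq : p < q) (hq : q ≤ n) : gammaExt n p q ∈ PORD n := by
  have bounds : ∀ i u, gammaExt n p q i = some u → i ≤ n ∧ 1 ≤ u ∧ u ≤ i := by
    intro i u hi
    have hdom : i ∈ Icc p n := domSet_gammaExt hpq.le hq ▸ mem_domSet_of_eq_some hi
    rw [mem_Icc] at hdom
    rcases lt_or_ge i q with hiq | hqi
    · rw [gammaExt_of_lt hdom.1 hiq, Option.some_inj] at hi
      omega
    · rw [gammaExt_of_le hqi hdom.2, Option.some_inj] at hi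
      omega
  refine ⟨⟨?_, ?_⟩, Or.inr (orientRev_gammaExt hpq hq), fun i u hi => (bounds i u hi).2.2⟩
  · exact (domSet_gammaExt hpq.le hq).trans_subset (Icc_subset_Icc_left hp)
  · rintro u ⟨i, hi⟩
    obtain ⟨hin, hu, hui⟩ := bounds i u hi
    exact ⟨hu, hui.trans hin⟩

theorem le_one_and_eq_of_gamma_eq_partialId (hpq : p + 2 ≤ q) (hq : q ≤ n)
    (h : gamma n p q = partialId (domSet (gamma n p q))) : p ≤ 1 ∧ q = n := by
  have fixes : ∀ i ∈ domSet (gamma n p q), gamma n p q i = some i := fun i hi =>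
    (congrFun h i).trans (partialId_of_mem hi)
  constructor
  · by_contra! hp
    have hmem : p + 1 ∈ domSet (gamma n p q) := mem_domSet_gamma.2 (by omega)
    have := (gamma_of_lt hmem (by omega)).symm.trans (fixes _ hmem)
    rw [Option.some_inj] at this
    omega
  · by_contra! hqn
    have hmem : q + 1 ∈ domSet (gamma n p q) := mem_domSet_gamma.2 (by omega)
    have := (gamma_of_le (by omega) hmem (by omega)).symm.trans (fixes _ hmem)
    rw [Option.some_inj] at this
    omega

theorem domSet_gamma_eq_Icc_of_undecomposable (hn : 4 ≤ n) (hp : 1 ≤ p) (hpq : p + 2 ≤ q)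
    (hq : q ≤ n) (h : Undecomposable (PORD n) (gamma n p q)) :
    domSet (gamma n p q) = Icc p n := by
  by_contra hdom
  have hrestrict := restrict_gammaExt hp (show p < q by omega) hq
  have hsub : domSet (gamma n p q) ⊆ Icc 1 n :=
    (domSet_gamma_subset (by omega) hq).trans (Icc_subset_Icc_left hp)
  have hne : gamma n p q ≠ gammaExt n p q := fun heq =>
    hdom ((congrArg domSet heq).trans (domSet_gammaExt (by omega) hq))
  have hid : gamma n p q = partialId (domSet (gamma n p q)) := by
    rw [← hrestrict] at h
    have := h.restrict_eq (gammaExt_mem_PORD hp (by omega) hq) hsub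
    rw [hrestrict] at this
    exact this.resolve_right hne
  obtain ⟨hp', rfl⟩ := le_one_and_eq_of_gamma_eq_partialId hpq hq hid
  rw [hid] at h
  have hmissing : ∀ i, 1 < i → i < q → i ∈ Icc 1 q \ domSet (gamma q p q) := fun i hi hiq =>
    ⟨⟨hi.le, hiq.le⟩, by rw [mem_domSet_gamma]; omega⟩
  exact absurd (h.subsingleton_diff hsub (hmissing 2 (by omega) (by omega))
    (hmissing 3 (by omega) (by omega))) (by decide)

end Necessity

/-! ### Factorizations of `γ_{p,q}` when its domain is `[p,n]` -/

section StrictMonotone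

variable {g : ℕ → ℕ} {s : Set ℕ} {a b : ℕ} [s.OrdConnected]

theorem add_le_add_of_strictMonoOn (h : StrictMonoOn g s) (ha : a ∈ s) (hb : b ∈ s)
    (hab : a ≤ b) : g a + b ≤ g b + a := by
  induction b, hab using Nat.le_induction with
  | base => rfl
  | succ b hab ih =>
    have hbs : b ∈ s := OrdConnected.out ‹_› ha hb ⟨hab, b.le_succ⟩
    have := h hbs hb b.lt_succ_self
    have := ih hbs
    omega

theorem add_le_add_of_strictAntiOn (h : StrictAntiOn g s) (ha : a ∈ s) (hb : b ∈ s)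
    (hab : a ≤ b) : g b + b ≤ g a + a := by
  induction b, hab using Nat.le_induction with
  | base => rfl
  | succ b hab ih =>
    have hbs : b ∈ s := OrdConnected.out ‹_› ha hb ⟨hab, b.le_succ⟩
    have := h hbs hb b.lt_succ_self
    have := ih hbs
    omega

end StrictMonotone

section Sufficiency

variable {n p q : ℕ} {x y z : PTrans}

theorem one_lt_of_domSet_gamma_eq_Icc (hpq : p + 2 ≤ q) (hq : q ≤ n)
    (hdom : domSet (gamma n p q) = Icc p n) : 1 < p := by
  have hmem : p + 1 ∈ domSet (gamma n p q) := hdom ▸ ⟨by omega, by omega⟩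
  rw [mem_domSet_gamma] at hmem
  omega

theorem val_gamma_left (hpq : p < q) : val (gamma n p q) p = p := by
  rw [val_of_eq_some (gamma_of_lt (mem_domSet_gamma.2 (by omega)) hpq)]
  omega

theorem val_gamma_right (hpq : p < q) : val (gamma n p q) q = q := by
  rw [val_of_eq_some (gamma_of_le hpq (mem_domSet_gamma.2 (by omega)) le_rfl)]
  omega

theorem eq_gamma_of_eqOn_Icc (hpq : p + 2 ≤ q) (hq : q ≤ n)
    (hdom : domSet (gamma n p q) = Icc p n) (hz : z ∈ PORD n)
    (heq : ∀ i ∈ Icc p n, z i = gamma n p q i) : gamma n p q = z := by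
  obtain ⟨hPT, hor, hdec⟩ := hz
  have hp := one_lt_of_domSet_gamma_eq_Icc hpq hq hdom
  have val_eq : ∀ i ∈ Icc p n, val z i = val (gamma n p q) i := fun i hi =>
    congrArg (Option.getD · 0) (heq i hi)
  have hsub : Icc p n ⊆ domSet z := fun i hi =>
    mem_domSet_of_eq_some ((heq i hi).trans (eq_some_val (hdom ▸ hi)))
  have hpI : p ∈ Icc p n := ⟨by omega, by omega⟩
  have hpI' : p + 1 ∈ Icc p n := ⟨by omega, by omega⟩
  have hqI : q ∈ Icc p n := ⟨by omega, by omega⟩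
  have hzp : val z p = p := (val_eq p hpI).trans (val_gamma_left (by omega))
  have hzq : val z q = q := (val_eq q hqI).trans (val_gamma_right (by omega))
  have hzp' : val z (p + 1) = 2 * p - (p + 1) :=
    (val_eq _ hpI').trans (val_of_eq_some (gamma_of_lt (hdom ▸ hpI') (by omega)))
  -- The values `p, p - 1, q` at `p < p + 1 < q` are not in nondecreasing cyclic order.
  have hrev : OrientRev z := hor.resolve_left fun hpres => by
    rcases hpres.btw hPT.finite_domSet (hsub hpI) (hsub hpI') (hsub hqI) (by omega) (by omega)
      with h | h | h <;> omega
  -- The values at `i < p < q` would be `< p`, `p` and `q`, in increasing cyclic order.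
  have hdomz : ∀ i ∈ domSet z, p ≤ i := by
    intro i hi
    by_contra! hip
    have := hdec.val_le hi
    rcases hrev.btw hPT.finite_domSet hi (hsub hpI) (hsub hqI) hip (by omega)
      with h | h | h <;> omega
  funext i
  by_cases hi : i ∈ Icc p n
  · exact (heq i hi).symm
  · rw [eq_none_of_notMem_domSet (hdom ▸ hi : i ∉ domSet (gamma n p q))]
    exact (eq_none_of_notMem_domSet fun hiz => hi ⟨hdomz i hiz, (hPT.1 hiz).2⟩).symm

theorem strictMonoOn_or_strictAntiOn_of_val_gamma_le (hpq : p < q) (hq : q ≤ n)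
    (hdom : domSet (gamma n p q) = Icc p n) (hx : x ∈ PORD n) (hsub : Icc p n ⊆ domSet x)
    (hinj : InjOn (val x) (Icc p n)) (hge : ∀ i ∈ Icc p n, val (gamma n p q) i ≤ val x i) :
    (StrictMonoOn (val x) (Ico p q) ∧ StrictMonoOn (val x) (Icc q n)) ∨
      (StrictAntiOn (val x) (Ico p q) ∧ StrictAntiOn (val x) (Icc q n)) := by
  obtain ⟨hPT, hor, hdec⟩ := hx
  have hle : ∀ i ∈ Icc p n, val x i ≤ i := fun i hi => hdec.val_le (hsub hi)
  have hpI : p ∈ Icc p n := ⟨le_rfl, hpq.le.trans hq⟩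
  have hqI : q ∈ Icc p n := ⟨hpq.le, hq⟩
  have hlowI : Ico p q ⊆ Icc p n := fun i hi => ⟨hi.1, hi.2.le.trans hq⟩
  have hhighI : Icc q n ⊆ Icc p n := Icc_subset_Icc_left hpq.le
  have hlow : Ico p q ⊆ {i ∈ domSet x | i < q ∧ val x i < val x q} := by
    refine fun i hi => ⟨hsub (hlowI hi), hi.2, ?_⟩
    calc val x i ≤ i := hle i (hlowI hi)
      _ < q := hi.2
      _ = val (gamma n p q) q := (val_gamma_right hpq).symm
      _ ≤ val x q := hge q hqI
  have hhigh : Icc q n ⊆ {i ∈ domSet x | p < i ∧ val x p < val x i} := by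
    refine fun i hi => ⟨hsub (hhighI hi), hpq.trans_le hi.1, ?_⟩
    calc val x p ≤ p := hle p hpI
      _ < val (gamma n p q) i := lt_val_gamma_of_le hpq (hdom ▸ hhighI hi) hi.1
      _ ≤ val x i := hge i (hhighI hi)
  have hfin := hPT.finite_domSet
  refine hor.imp (fun hpres => ⟨?_, ?_⟩) fun hrev => ⟨?_, ?_⟩
  · exact ((hpres.monotoneOn_lt hfin (hsub hqI)).mono hlow).strictMonoOn_of_injOn (hinj.mono hlowI)
  · exact ((hpres.monotoneOn_gt hfin (hsub hpI)).mono hhigh).strictMonoOn_of_injOn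
      (hinj.mono hhighI)
  · exact ((hrev.antitoneOn_lt hfin (hsub hqI)).mono hlow).strictAntiOn_of_injOn (hinj.mono hlowI)
  · exact ((hrev.antitoneOn_gt hfin (hsub hpI)).mono hhigh).strictAntiOn_of_injOn
      (hinj.mono hhighI)

theorem val_eq_self_or_eq_val_gamma (hpq : p < q) (hq : q ≤ n)
    (hdom : domSet (gamma n p q) = Icc p n) (hx : x ∈ PORD n) (hy : OrderDecr y)
    (hxy : x * y = gamma n p q) :
    (∀ i ∈ Icc p n, val x i = i) ∨ ∀ i ∈ Icc p n, val x i = val (gamma n p q) i := by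
  have hsub : Icc p n ⊆ domSet x := hdom ▸ hxy ▸ domSet_mul_subset
  have hinj : InjOn (val x) (Icc p n) := by
    rw [← hdom, ← hxy]
    exact injOn_val_of_injOn_mul (hxy ▸ injOn_gamma hpq)
  have hge : ∀ i ∈ Icc p n, val (gamma n p q) i ≤ val x i := by
    rw [← hdom, ← hxy]
    exact fun i => hy.val_mul_le
  have hle : ∀ i ∈ Icc p n, val x i ≤ i := fun i hi => hx.2.2.val_le (hsub hi)
  have hpI : p ∈ Icc p n := ⟨le_rfl, hpq.le.trans hq⟩
  have hqI : q ∈ Icc p n := ⟨hpq.le, hq⟩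
  have hxp : val x p = p := (hle p hpI).antisymm ((val_gamma_left hpq).symm.trans_le (hge p hpI))
  have hxq : val x q = q := (hle q hqI).antisymm ((val_gamma_right hpq).symm.trans_le (hge q hqI))
  refine (strictMonoOn_or_strictAntiOn_of_val_gamma_le hpq hq hdom hx hsub hinj hge).imp ?_ ?_
  · rintro ⟨hlow, hhigh⟩ i hi
    refine (hle i hi).antisymm ?_
    rcases lt_or_ge i q with hiq | hqi
    · have := add_le_add_of_strictMonoOn hlow ⟨le_rfl, hpq⟩ ⟨hi.1, hiq⟩ hi.1
      omega
    · have := add_le_add_of_strictMonoOn hhigh ⟨le_rfl, hq⟩ ⟨hqi, hi.2⟩ hqi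
      omega
  · rintro ⟨hlow, hhigh⟩ i hi
    refine le_antisymm ?_ (hge i hi)
    rcases lt_or_ge i q with hiq | hqi
    · rw [val_of_eq_some (gamma_of_lt (hdom ▸ hi) hiq)]
      have := add_le_add_of_strictAntiOn hlow ⟨le_rfl, hpq⟩ ⟨hi.1, hiq⟩ hi.1
      omega
    · rw [val_of_eq_some (gamma_of_le hpq (hdom ▸ hi) hqi)]
      have := add_le_add_of_strictAntiOn hhigh ⟨le_rfl, hq⟩ ⟨hqi, hi.2⟩ hqi
      omega

theorem undecomposable_gamma (hpq : p + 2 ≤ q) (hq : q ≤ n)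
    (hdom : domSet (gamma n p q) = Icc p n) : Undecomposable (PORD n) (gamma n p q) := by
  intro x hx y hy hxy
  have happly : ∀ i ∈ Icc p n, x i = some (val x i) ∧ y (val x i) = gamma n p q i := by
    rw [← hdom, hxy]
    exact fun i => eq_some_val_and_apply_val_of_mem_domSet_mul
  rcases val_eq_self_or_eq_val_gamma (by omega) hq hdom hx hy.2.2 hxy.symm with hid | hval
  · refine Or.inr (eq_gamma_of_eqOn_Icc hpq hq hdom hy fun i hi => ?_)
    rw [← (happly i hi).2, hid i hi]
  · refine Or.inl (eq_gamma_of_eqOn_Icc hpq hq hdom hx fun i hi => ?_)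
    rw [(happly i hi).1, hval i hi, ← eq_some_val (hdom ▸ hi)]

end Sufficiency

end OrientedPT

open OrientedPT in
/-- For `n ≥ 4` and `1 ≤ p ≤ q−2 ≤ n−2`, `γ_{p,q}` is
undecomposable in `PORD_n` iff `q−1` and `n` lie in its domain, i.e. iff its
domain is `[p,n]`. -/
theorem gamma_undecomposable_iff (n p q : ℕ) (hn : 4 ≤ n) (hp : 1 ≤ p)
    (hpq : p + 2 ≤ q) (hq : q ≤ n) :
    (Undecomposable (PORD n) (gamma n p q) ↔
      (q - 1 ∈ domSet (gamma n p q) ∧ n ∈ domSet (gamma n p q))) ∧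
    (Undecomposable (PORD n) (gamma n p q) ↔
      domSet (gamma n p q) = Set.Icc p n) := by
  have key : Undecomposable (PORD n) (gamma n p q) ↔ domSet (gamma n p q) = Set.Icc p n :=
    ⟨domSet_gamma_eq_Icc_of_undecomposable hn hp hpq hq, undecomposable_gamma hpq hq⟩
  exact ⟨key.trans (domSet_gamma_eq_Icc_iff hp hpq hq), key⟩
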